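/- Let 𝓡 be a finite set of pairwise disjoint closed horizontal and vertical line segments in ℝ² in general position, and let Q be a convex partial transversal of 𝓡 with extreme vertices ℓ, r, u, b (leftmost, rightmost, topmost, bottommost). Then there exists a convex partial transversal Q′ of 𝓡 with the same extreme vertices ℓ, r, u, b, such that every segment of 𝓡 intersected by the upper-left, upper-right, lower-right, or lower-left hull of Q is intersected by the corresponding hull of Q′, every strictly convex vertex on the upper-left hull of Q′ lies on a bottom endpoint of a vertical segment or on a right endpoint of a horizontal segment of 𝓡, every strictly convex vertex on the upper-right hull of Q′ lies on a bottom endpoint of a vertical segment or on a left endpoint of a horizontal segment, every strictly convex vertex on the lower-left hull of Q′ lies on a top endpoint of a vertical segment or on a right endpoint of a horizontal segment, and every strictly convex vertex on the lower-right hull of Q′ lies on a top endpoint of a vertical segment or on a left endpoint of a horizontal segment. -/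

import Mathlib

/-- A closed axis-parallel line segment in the plane, given by its two endpoints:
`p` is the bottom endpoint if the segment is vertical and the left endpoint if it
is horizontal; `q` is the top, resp. right, endpoint. -/
structure HVSeg where
  p : ℝ × ℝ
  q : ℝ × ℝ
  hv : (p.1 = q.1 ∧ p.2 ≤ q.2) ∨ (p.2 = q.2 ∧ p.1 ≤ q.1)

namespace HVSeg

/-- The set of points of the segment. -/
def carrier (s : HVSeg) : Set (ℝ × ℝ) := segment ℝ s.p s.q

/-- The segment is vertical. -/
def IsVert (s : HVSeg) : Prop := s.p.1 = s.q.1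

/-- The segment is horizontal. -/
def IsHoriz (s : HVSeg) : Prop := s.p.2 = s.q.2

end HVSeg

/-- The set of all endpoints of the segments of `R`. -/
def endpointsOf (R : Finset HVSeg) : Set (ℝ × ℝ) := ⋃ s ∈ R, {HVSeg.p s, HVSeg.q s}

/-- General position: no three (distinct) segment endpoints are collinear. -/
def GenPos (R : Finset HVSeg) : Prop :=
  ∀ p q r : ℝ × ℝ, p ∈ endpointsOf R → q ∈ endpointsOf R → r ∈ endpointsOf R →
    p ≠ q → p ≠ r → q ≠ r → ¬ Collinear ℝ ({p, q, r} : Set (ℝ × ℝ))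

/-- A finite set of points is in weakly convex position if each of its points lies
on the boundary line of a closed halfplane containing the whole set. -/
def WeaklyConvexPos (Q : Set (ℝ × ℝ)) : Prop :=
  ∀ q ∈ Q, ∃ a : ℝ × ℝ, ∃ c : ℝ, a ≠ 0 ∧
    (∀ p ∈ Q, a.1 * p.1 + a.2 * p.2 ≤ c) ∧ a.1 * q.1 + a.2 * q.2 = c

/-- A convex partial transversal of `R`: a finite set `Q` of points in weakly
convex position together with an injective assignment `f` of each point of `Q` to
a segment of `R` containing it. -/
structure CPT (R : Finset HVSeg) where
  Q : Finset (ℝ × ℝ)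
  f : ℝ × ℝ → HVSeg
  pos : WeaklyConvexPos ↑Q
  f_mem : ∀ q ∈ Q, f q ∈ R
  f_inj : Set.InjOn f ↑Q
  q_mem : ∀ q ∈ Q, q ∈ (f q).carrier

/-- The upper hull of a planar point set `A`: the points of the convex hull of `A`
that are topmost on their vertical line. -/
def upperHullS (A : Set (ℝ × ℝ)) : Set (ℝ × ℝ) :=
  {p ∈ convexHull ℝ A | ∀ q ∈ convexHull ℝ A, q.1 = p.1 → q.2 ≤ p.2}

/-- The lower hull of a planar point set `A`. -/
def lowerHullS (A : Set (ℝ × ℝ)) : Set (ℝ × ℝ) :=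
  {p ∈ convexHull ℝ A | ∀ q ∈ convexHull ℝ A, q.1 = p.1 → p.2 ≤ q.2}

/-- The upper-left hull: the part of the upper hull between the leftmost vertex
and the topmost vertex `u`. -/
def ULHull (A : Set (ℝ × ℝ)) (u : ℝ × ℝ) : Set (ℝ × ℝ) :=
  {x ∈ upperHullS A | x.1 ≤ u.1}

/-- The upper-right hull: the part of the upper hull between the topmost vertex
`u` and the rightmost vertex. -/
def URHull (A : Set (ℝ × ℝ)) (u : ℝ × ℝ) : Set (ℝ × ℝ) :=
  {x ∈ upperHullS A | u.1 ≤ x.1}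

/-- The lower-left hull: the part of the lower hull between the leftmost vertex
and the bottommost vertex `b`. -/
def LLHull (A : Set (ℝ × ℝ)) (b : ℝ × ℝ) : Set (ℝ × ℝ) :=
  {x ∈ lowerHullS A | x.1 ≤ b.1}

/-- The lower-right hull: the part of the lower hull between the bottommost
vertex `b` and the rightmost vertex. -/
def LRHull (A : Set (ℝ × ℝ)) (b : ℝ × ℝ) : Set (ℝ × ℝ) :=
  {x ∈ lowerHullS A | b.1 ≤ x.1}

/-- `x` is a strictly convex vertex of the upper-left hull (leftmost vertex `l`,
topmost vertex `u`): an extreme point of the convex hull lying on the upper hull,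
strictly between `l` and `u` in `x`-coordinate. -/
def SCV_UL (A : Set (ℝ × ℝ)) (l u x : ℝ × ℝ) : Prop :=
  x ∈ upperHullS A ∧ x ∈ Set.extremePoints ℝ (convexHull ℝ A) ∧ l.1 < x.1 ∧ x.1 < u.1

/-- Strictly convex vertex of the upper-right hull. -/
def SCV_UR (A : Set (ℝ × ℝ)) (u r x : ℝ × ℝ) : Prop :=
  x ∈ upperHullS A ∧ x ∈ Set.extremePoints ℝ (convexHull ℝ A) ∧ u.1 < x.1 ∧ x.1 < r.1

/-- Strictly convex vertex of the lower-left hull. -/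
def SCV_LL (A : Set (ℝ × ℝ)) (l b x : ℝ × ℝ) : Prop :=
  x ∈ lowerHullS A ∧ x ∈ Set.extremePoints ℝ (convexHull ℝ A) ∧ l.1 < x.1 ∧ x.1 < b.1

/-- Strictly convex vertex of the lower-right hull. -/
def SCV_LR (A : Set (ℝ × ℝ)) (b r x : ℝ × ℝ) : Prop :=
  x ∈ lowerHullS A ∧ x ∈ Set.extremePoints ℝ (convexHull ℝ A) ∧ b.1 < x.1 ∧ x.1 < r.1

/-- Orientation form. -/
def crossC (p q e : ℝ × ℝ) : ℝ := (q.1 - p.1) * (e.2 - p.2) - (q.2 - p.2) * (e.1 - p.1)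

/-- Generic upper-left hull of a convex set. -/
def ulH (K : Set (ℝ × ℝ)) (u : ℝ × ℝ) : Set (ℝ × ℝ) :=
  {x | x ∈ K ∧ (∀ q ∈ K, q.1 = x.1 → q.2 ≤ x.2) ∧ x.1 ≤ u.1}

theorem comb_mem {K : Set (ℝ × ℝ)} (hK : Convex ℝ K) {p q : ℝ × ℝ} (hp : p ∈ K) (hq : q ∈ K)
    {t : ℝ} (h0 : 0 ≤ t) (h1 : t ≤ 1) :
    (p.1 + t * (q.1 - p.1), p.2 + t * (q.2 - p.2)) ∈ K := by
  have := hK hp hq (sub_nonneg.2 h1) h0 (by ring)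
  convert this using 1
  ext <;> simp <;> ring

theorem chordV {K : Set (ℝ × ℝ)} (hK : Convex ℝ K) {p q : ℝ × ℝ} (hp : p ∈ K) (hq : q ∈ K)
    {x : ℝ} (hpq : p.1 < q.1) (h0 : p.1 ≤ x) (h1 : x ≤ q.1) :
    ∃ y, (x, y) ∈ K ∧ (q.1 - p.1) * (y - p.2) = (q.2 - p.2) * (x - p.1) := by
  have hd : 0 < q.1 - p.1 := by linarith
  refine ⟨p.2 + (x - p.1) / (q.1 - p.1) * (q.2 - p.2), ?_, by field_simp; ring⟩
  have := comb_mem hK hp hq (t := (x - p.1) / (q.1 - p.1))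
    (div_nonneg (by linarith) hd.le) ((div_le_one hd).2 (by linarith))
  convert this using 2
  field_simp; ring

theorem chordH {K : Set (ℝ × ℝ)} (hK : Convex ℝ K) {p q : ℝ × ℝ} (hp : p ∈ K) (hq : q ∈ K)
    {y : ℝ} (hpq : p.2 < q.2) (h0 : p.2 ≤ y) (h1 : y ≤ q.2) :
    ∃ x, (x, y) ∈ K ∧ (q.2 - p.2) * (x - p.1) = (q.1 - p.1) * (y - p.2) := by
  have hd : 0 < q.2 - p.2 := by linarith
  refine ⟨p.1 + (y - p.2) / (q.2 - p.2) * (q.1 - p.1), ?_, by field_simp; ring⟩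
  have := comb_mem hK hp hq (t := (y - p.2) / (q.2 - p.2))
    (div_nonneg (by linarith) hd.le) ((div_le_one hd).2 (by linarith))
  convert this using 2
  field_simp; ring

theorem cross_box {l u e : ℝ × ℝ} (h1 : l.1 ≤ u.1) (h2 : l.2 ≤ u.2) (h3 : l.1 ≤ e.1)
    (h4 : e.2 ≤ u.2) (hC : 0 < crossC l u e) :
    l.1 < u.1 ∧ l.2 < u.2 ∧ e.1 < u.1 ∧ l.2 < e.2 := by
  unfold crossC at hC
  refine ⟨?_, ?_, ?_, ?_⟩ <;> by_contra h <;> push Not at h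
  · nlinarith [mul_nonneg (sub_nonneg.2 h2) (sub_nonneg.2 h3), le_antisymm h1 h]
  · nlinarith [mul_nonneg (sub_nonneg.2 h1) (sub_nonneg.2 h4), le_antisymm h2 h]
  · nlinarith [mul_nonneg (sub_nonneg.2 h1) (sub_nonneg.2 h4),
      mul_nonneg (sub_nonneg.2 h2) (sub_nonneg.2 h)]
  · nlinarith [mul_nonneg (sub_nonneg.2 h1) (sub_nonneg.2 h),
      mul_nonneg (sub_nonneg.2 h2) (sub_nonneg.2 h3)]

/-- monotonicity of the upper-left hull -/
theorem ul_mono {K : Set (ℝ × ℝ)} (hK : Convex ℝ K) {u z v : ℝ × ℝ} (hu : u ∈ K)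
    (hu2 : ∀ q ∈ K, q.2 ≤ u.2) (hz : z ∈ ulH K u) (hv : v ∈ K) (hvz : v.1 ≤ z.1) :
    v.2 ≤ z.2 := by
  obtain ⟨hzK, hzt, hzu⟩ := hz
  rcases hvz.eq_or_lt with h | h
  · exact hzt v hv h
  obtain ⟨y, hy, he⟩ := chordV hK hv hu (by linarith) hvz hzu
  have := hzt _ hy rfl
  have h2 := hu2 v hv
  simp only at this
  nlinarith [mul_nonneg (sub_nonneg.2 h2) (sub_nonneg.2 hvz)]

theorem coverV {K K' : Set (ℝ × ℝ)} (hK : Convex ℝ K) (hK' : Convex ℝ K') (hc : IsCompact K')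
    (hKK : K' ⊆ K) {l u z : ℝ × ℝ} (hl : l ∈ K') (hu : u ∈ K')
    (hl1 : ∀ q ∈ K, l.1 ≤ q.1) (hu2 : ∀ q ∈ K, q.2 ≤ u.2) (hz : z ∈ ulH K u) {ey : ℝ}
    (hey : ey ≤ z.2)
    (hE : ((z.1, ey) : ℝ × ℝ) ∈ K → 0 < crossC l u (z.1, ey) → ((z.1, ey) : ℝ × ℝ) ∈ K') :
    ∃ w ∈ ulH K' u, w.1 = z.1 ∧ ey ≤ w.2 ∧ w.2 ≤ z.2 := by
  have hz' := hz
  obtain ⟨hzK, hzt, hzu⟩ := hz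
  have hlz := hl1 z hzK
  -- a good point of K'
  have key : ∃ c ∈ K', c.1 = z.1 ∧ ey ≤ c.2 := by
    rcases (hl1 u (hKK hu)).eq_or_lt with h | h
    · exact ⟨u, hu, by linarith, hey.trans (hu2 z hzK)⟩
    obtain ⟨y, hy, he⟩ := chordV hK' hl hu h hlz hzu
    by_cases hc : ey ≤ y
    · exact ⟨_, hy, rfl, hc⟩
    push Not at hc
    refine ⟨(z.1, ey), hE ?_ ?_, rfl, le_rfl⟩
    · have hyz : y < z.2 := by linarith
      obtain ⟨x, hx, hxe⟩ := chordH hK (hKK hy) hzK (y := ey) hyz hc.le hey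
      have : x = z.1 := by
        simp only [sub_self, zero_mul, mul_eq_zero] at hxe
        rcases hxe with h | h <;> linarith
      rwa [this] at hx
    · unfold crossC
      simp only
      nlinarith
  obtain ⟨c, hcK, hc1, hc2⟩ := key
  have hcomp : IsCompact (K' ∩ {p | p.1 = z.1}) :=
    hc.inter_right (isClosed_eq continuous_fst continuous_const)
  obtain ⟨w, ⟨hwK, hw1⟩, hwm⟩ := hcomp.exists_isMaxOn ⟨c, hcK, hc1⟩ continuous_snd.continuousOn
  simp only [Set.mem_ofPred_eq] at hw1
  refine ⟨w, ⟨hwK, fun q hq h => hwm ⟨hq, h.trans hw1⟩, hw1 ▸ hzu⟩, hw1,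
    hc2.trans (hwm ⟨hcK, hc1⟩), hzt w (hKK hwK) hw1⟩

theorem coverH {K K' : Set (ℝ × ℝ)} (hK : Convex ℝ K) (hK' : Convex ℝ K') (hc : IsCompact K')
    (hKK : K' ⊆ K) {l u z : ℝ × ℝ} (hl : l ∈ K') (hu : u ∈ K')
    (hl1 : ∀ q ∈ K, l.1 ≤ q.1) (hu2 : ∀ q ∈ K, q.2 ≤ u.2) (hz : z ∈ ulH K u) {ex : ℝ}
    (hex : z.1 ≤ ex)
    (hE : ((ex, z.2) : ℝ × ℝ) ∈ K → 0 < crossC l u (ex, z.2) → ((ex, z.2) : ℝ × ℝ) ∈ K') :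
    ∃ w ∈ ulH K' u, w.2 = z.2 ∧ z.1 ≤ w.1 ∧ w.1 ≤ ex := by
  have hz' := hz
  obtain ⟨hzK, hzt, hzu⟩ := hz
  have hlz := hl1 z hzK
  have hlz2 : l.2 ≤ z.2 := ul_mono hK (hKK hu) hu2 hz' (hKK hl) hlz
  have hzu2 := hu2 z hzK
  have hlu := hl1 u (hKK hu)
  have key : ∃ c ∈ K', c.2 = z.2 ∧ c.1 ≤ max ex l.1 ∧ c.1 ≤ u.1 := by
    rcases (hlz2.trans hzu2).eq_or_lt with h | h
    · exact ⟨l, hl, by linarith, le_max_right _ _, hlu⟩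
    obtain ⟨x, hx, he⟩ := chordH hK' hl hu h hlz2 hzu2
    have hxu : x ≤ u.1 := by
      by_contra hh
      push Not at hh
      nlinarith [mul_nonneg (sub_nonneg.2 hlu) (sub_nonneg.2 hzu2)]
    by_cases hc : x ≤ ex
    · exact ⟨_, hx, rfl, hc.trans (le_max_left _ _), hxu⟩
    push Not at hc
    refine ⟨(ex, z.2), hE ?_ ?_, rfl, le_max_left _ _, by simp only; linarith⟩
    · obtain ⟨y, hy, hye⟩ := chordV hK hzK (hKK hx) (x := ex) (by simp only; linarith) hex hc.le
      have : y = z.2 := by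
        simp only [sub_self, zero_mul, mul_eq_zero] at hye
        rcases hye with h | h <;> linarith
      rwa [this] at hy
    · unfold crossC
      simp only
      nlinarith
  obtain ⟨c, hcK, hc2, hc1, hcu⟩ := key
  have hc1 : c.1 ≤ ex := by rwa [max_eq_left (by linarith)] at hc1
  have hcomp : IsCompact (K' ∩ {p | p.2 = z.2}) :=
    hc.inter_right (isClosed_eq continuous_snd continuous_const)
  obtain ⟨w, ⟨hwK, hw2⟩, hwm⟩ := hcomp.exists_isMinOn ⟨c, hcK, hc2⟩ continuous_fst.continuousOn
  simp only [Set.mem_ofPred_eq] at hw2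
  have hwc : w.1 ≤ c.1 := hwm ⟨hcK, hc2⟩
  by_cases hwz : w.1 ≤ z.1
  · have hzK' : z ∈ K' := by
      rcases hwz.eq_or_lt with h | h
      · have : w = z := Prod.ext h hw2
        rwa [← this]
      obtain ⟨y, hy, he⟩ := chordV hK' hwK hu (by linarith) hwz hzu
      have h1 : y ≤ z.2 := hzt _ (hKK hy) rfl
      have h2 : z.2 ≤ y := by
        by_contra hh
        push Not at hh
        nlinarith [mul_nonneg (sub_nonneg.2 hzu2) (sub_nonneg.2 hwz)]
      have : z = (z.1, y) := Prod.ext rfl (le_antisymm h2 h1)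
      rwa [this]
    exact ⟨z, ⟨hzK', fun q hq => hzt q (hKK hq), hzu⟩, rfl, le_rfl, hex⟩
  push Not at hwz
  refine ⟨w, ⟨hwK, fun q hq h => ?_, hwc.trans hcu⟩, hw2, hwz.le, hwc.trans hc1⟩
  by_contra hq2
  push Not at hq2
  rcases hlz2.eq_or_lt with h' | h'
  · have : w.1 ≤ l.1 := hwm ⟨hl, h'⟩
    linarith
  · obtain ⟨x, hx, he⟩ := chordH hK' hl hq (y := z.2) (by linarith) hlz2 (by linarith)
    have : w.1 ≤ x := hwm ⟨hx, rfl⟩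
    nlinarith

/-- extreme points beyond the chord: unique on their vertical/horizontal half lines -/
theorem ext_vert {K' : Set (ℝ × ℝ)} (hK' : Convex ℝ K') {l u e w : ℝ × ℝ}
    (hl : l ∈ K') (hu : u ∈ K') (hl1 : ∀ q ∈ K', l.1 ≤ q.1) (hu2 : ∀ q ∈ K', q.2 ≤ u.2)
    (he : e ∈ Set.extremePoints ℝ K') (hC : 0 < crossC l u e) (hw : w ∈ K')
    (h1 : w.1 = e.1) (h2 : e.2 ≤ w.2) : w = e := by
  obtain ⟨b1, b2, b3, b4⟩ := cross_box (hl1 u hu) (hu2 l hl) (hl1 e he.1) (hu2 e he.1) hC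
  rcases h2.eq_or_lt with h | h
  · exact Prod.ext h1 h.symm
  obtain ⟨y, hy, hye⟩ := chordV hK' hl hu b1 (hl1 e he.1) b3.le
  have hyl : y < e.2 := by unfold crossC at hC; nlinarith
  have hm : e ∈ openSegment ℝ w (e.1, y) := by
    have hd : 0 < w.2 - y := by linarith
    refine ⟨(e.2 - y) / (w.2 - y), (w.2 - e.2) / (w.2 - y), div_pos (by linarith) hd,
      div_pos (by linarith) hd, by field_simp; ring, ?_⟩
    ext <;> simp only [Prod.fst_add, Prod.snd_add, Prod.smul_fst, Prod.smul_snd, smul_eq_mul]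
    · rw [h1]; field_simp; ring
    · field_simp; ring
  exact he.2 hw hy hm

theorem ext_horiz {K' : Set (ℝ × ℝ)} (hK' : Convex ℝ K') {l u e w : ℝ × ℝ}
    (hl : l ∈ K') (hu : u ∈ K') (hl1 : ∀ q ∈ K', l.1 ≤ q.1) (hu2 : ∀ q ∈ K', q.2 ≤ u.2)
    (he : e ∈ Set.extremePoints ℝ K') (hC : 0 < crossC l u e) (hw : w ∈ K')
    (h1 : w.2 = e.2) (h2 : w.1 ≤ e.1) : w = e := by
  obtain ⟨b1, b2, b3, b4⟩ := cross_box (hl1 u hu) (hu2 l hl) (hl1 e he.1) (hu2 e he.1) hC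
  rcases h2.eq_or_lt with h | h
  · exact Prod.ext h h1
  obtain ⟨x, hx, hxe⟩ := chordH hK' hl hu b2 b4.le (hu2 e he.1)
  have hyl : e.1 < x := by unfold crossC at hC; nlinarith
  have hm : e ∈ openSegment ℝ w (x, e.2) := by
    have hd : 0 < x - w.1 := by linarith
    refine ⟨(x - e.1) / (x - w.1), (e.1 - w.1) / (x - w.1), div_pos (by linarith) hd,
      div_pos (by linarith) hd, by field_simp; ring, ?_⟩
    ext <;> simp only [Prod.fst_add, Prod.snd_add, Prod.smul_fst, Prod.smul_snd, smul_eq_mul]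
    · field_simp; ring
    · rw [h1]; field_simp; ring
  exact he.2 hw hx hm

theorem scv_cross {K' : Set (ℝ × ℝ)} (hK' : Convex ℝ K') {l u x : ℝ × ℝ}
    (hl : l ∈ K') (hu : u ∈ K') (hx : x ∈ Set.extremePoints ℝ K')
    (hxt : ∀ q ∈ K', q.1 = x.1 → q.2 ≤ x.2) (h1 : l.1 < x.1) (h2 : x.1 < u.1) :
    0 < crossC l u x := by
  obtain ⟨y, hy, he⟩ := chordV hK' hl hu (h1.trans h2) h1.le h2.le
  have h3 : y ≤ x.2 := hxt _ hy rfl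
  rcases h3.eq_or_lt with h | h
  · exfalso
    have hm : x ∈ openSegment ℝ l u := by
      have hd : 0 < u.1 - l.1 := by linarith
      refine ⟨(u.1 - x.1) / (u.1 - l.1), (x.1 - l.1) / (u.1 - l.1), div_pos (by linarith) hd,
        div_pos (by linarith) hd, by field_simp; ring, ?_⟩
      ext <;> simp only [Prod.fst_add, Prod.snd_add, Prod.smul_fst, Prod.smul_snd, smul_eq_mul]
      · field_simp; ring
      · rw [← h]; field_simp; linarith
    have := hx.2 hl hu hm
    rw [this] at h1
    exact lt_irrefl _ h1
  · unfold crossC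
    nlinarith

/-- a point of the box beyond the upper-left chord is beyond no other chord -/
theorem cross_disj {l r u b e : ℝ × ℝ} (hlu : l.1 ≤ u.1) (hlb : l.1 ≤ b.1) (hle : l.1 ≤ e.1)
    (hur : u.1 ≤ r.1) (hbr : b.1 ≤ r.1) (her : e.1 ≤ r.1)
    (hbl : b.2 ≤ l.2) (hbr2 : b.2 ≤ r.2) (hbe : b.2 ≤ e.2)
    (hlu2 : l.2 ≤ u.2) (hru : r.2 ≤ u.2) (heu : e.2 ≤ u.2) (hC : 0 < crossC l u e) :
    crossC l u r ≤ 0 ∧ crossC l u b ≤ 0 ∧ 0 ≤ crossC r u e ∧ 0 ≤ crossC l b e ∧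
      crossC r b e ≤ 0 := by
  obtain ⟨b1, b2, b3, b4⟩ := cross_box hlu hlu2 hle heu hC
  have hr : crossC l u r ≤ 0 := by
    unfold crossC
    nlinarith [mul_nonneg (sub_nonneg.2 hlu) (sub_nonneg.2 hru),
      mul_nonneg (sub_nonneg.2 hlu2) (sub_nonneg.2 hur)]
  have hb : crossC l u b ≤ 0 := by
    unfold crossC
    nlinarith [mul_nonneg (sub_nonneg.2 hlu) (sub_nonneg.2 hbl),
      mul_nonneg (sub_nonneg.2 hlu2) (sub_nonneg.2 hlb)]
  refine ⟨hr, hb, ?_, ?_, ?_⟩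
  · unfold crossC
    nlinarith [mul_nonneg (sub_nonneg.2 hru) (sub_nonneg.2 b3.le),
      mul_nonneg (sub_nonneg.2 hur) (sub_nonneg.2 heu)]
  · unfold crossC
    nlinarith [mul_nonneg (sub_nonneg.2 hlb) (sub_nonneg.2 b4.le),
      mul_nonneg (sub_nonneg.2 hbl) (sub_nonneg.2 hle)]
  · by_contra hn
    push Not at hn
    rcases le_or_gt e.1 b.1 with h | h
    · unfold crossC at hn
      nlinarith [mul_nonneg (sub_nonneg.2 h) (sub_nonneg.2 hbr2),
        mul_nonneg (sub_nonneg.2 hbr) (sub_nonneg.2 hbe)]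
    · have hd : 0 < r.1 - b.1 := by linarith
      have : (r.1 - b.1) * crossC l u e =
        (r.1 - e.1) * crossC l u b + (e.1 - b.1) * crossC l u r
          - (u.1 - l.1) * crossC r b e := by unfold crossC; ring
      have h1 := mul_pos hd hC
      have h2 := mul_nonneg (sub_nonneg.2 her) (neg_nonneg.2 hb)
      have h3 := mul_nonneg (sub_nonneg.2 h.le) (neg_nonneg.2 hr)
      have h4 := mul_nonneg (sub_nonneg.2 hlu) hn.le
      linarith

/-- axis reflections -/
def rho (σ τ : ℝ) (p : ℝ × ℝ) : ℝ × ℝ := (σ * p.1, τ * p.2)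

/-- A sign. -/
def Sgn (σ : ℝ) : Prop := σ = 1 ∨ σ = -1

theorem Sgn.sq {σ : ℝ} (h : Sgn σ) : σ * σ = 1 := by
  rcases h with rfl | rfl <;> norm_num

theorem Sgn.cancel {σ : ℝ} (h : Sgn σ) (x : ℝ) : σ * (σ * x) = x := by
  rw [← mul_assoc, h.sq, one_mul]

theorem rho_rho {σ τ : ℝ} (hσ : Sgn σ) (hτ : Sgn τ) (p : ℝ × ℝ) : rho σ τ (rho σ τ p) = p := by
  ext <;> simp [rho, hσ.cancel, hτ.cancel]

theorem rho_comb (σ τ a b : ℝ) (p q : ℝ × ℝ) :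
    rho σ τ (a • p + b • q) = a • rho σ τ p + b • rho σ τ q := by
  ext <;> simp [rho] <;> ring

theorem rho_cross (σ τ : ℝ) (p q e : ℝ × ℝ) :
    crossC (rho σ τ p) (rho σ τ q) (rho σ τ e) = σ * τ * crossC p q e := by
  simp only [crossC, rho]; ring

/-- the reflected set -/
def rset (σ τ : ℝ) (K : Set (ℝ × ℝ)) : Set (ℝ × ℝ) := {p | rho σ τ p ∈ K}

theorem mem_rset {σ τ : ℝ} {K : Set (ℝ × ℝ)} {p : ℝ × ℝ} : p ∈ rset σ τ K ↔ rho σ τ p ∈ K :=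
  Iff.rfl

theorem rset_convex {σ τ : ℝ} {K : Set (ℝ × ℝ)} (hK : Convex ℝ K) : Convex ℝ (rset σ τ K) := by
  intro x hx y hy a b ha hb hab
  rw [mem_rset, rho_comb]
  exact hK hx hy ha hb hab

theorem rho_mem {σ τ : ℝ} (hσ : Sgn σ) (hτ : Sgn τ) {K : Set (ℝ × ℝ)} {p : ℝ × ℝ} (hp : p ∈ K) :
    rho σ τ p ∈ rset σ τ K := by
  rw [mem_rset, rho_rho hσ hτ]; exact hp

theorem rset_compact {σ τ : ℝ} (hσ : Sgn σ) (hτ : Sgn τ) {K : Set (ℝ × ℝ)} (hK : IsCompact K) :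
    IsCompact (rset σ τ K) := by
  have hc : Continuous (rho σ τ) := by unfold rho; fun_prop
  have : rset σ τ K = rho σ τ '' K := by
    ext p
    constructor
    · intro h
      exact ⟨_, h, rho_rho hσ hτ p⟩
    · rintro ⟨q, hq, rfl⟩
      exact rho_mem hσ hτ hq
  rw [this]
  exact hK.image hc

theorem rset_ext {σ τ : ℝ} (hσ : Sgn σ) (hτ : Sgn τ) {K : Set (ℝ × ℝ)} {e : ℝ × ℝ}
    (he : e ∈ Set.extremePoints ℝ K) : rho σ τ e ∈ Set.extremePoints ℝ (rset σ τ K) := by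
  refine ⟨rho_mem hσ hτ he.1, ?_⟩
  rintro x hx y hy ⟨a, b, ha, hb, hab, h⟩
  have : rho σ τ x = e := by
    refine he.2 hx hy ⟨a, b, ha, hb, hab, ?_⟩
    rw [← rho_comb, h, rho_rho hσ hτ]
  rw [← this, rho_rho hσ hτ]

/-- generic quarter hull -/
def gH (σ τ : ℝ) (K : Set (ℝ × ℝ)) (u : ℝ × ℝ) : Set (ℝ × ℝ) :=
  {x | x ∈ K ∧ (∀ q ∈ K, q.1 = x.1 → τ * q.2 ≤ τ * x.2) ∧ σ * x.1 ≤ σ * u.1}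

theorem mem_gH {σ τ : ℝ} (hσ : Sgn σ) (hτ : Sgn τ) {K : Set (ℝ × ℝ)} {u x : ℝ × ℝ} :
    x ∈ gH σ τ K u ↔ rho σ τ x ∈ ulH (rset σ τ K) (rho σ τ u) := by
  constructor
  · rintro ⟨h1, h2, h3⟩
    refine ⟨rho_mem hσ hτ h1, fun q hq h => ?_, h3⟩
    have := h2 _ hq (by simp only [rho] at h ⊢; rw [h, hσ.cancel])
    simpa only [rho, hτ.cancel] using this
  · rintro ⟨h1, h2, h3⟩
    refine ⟨by rwa [mem_rset, rho_rho hσ hτ] at h1, fun q hq h => ?_, h3⟩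
    exact h2 _ (rho_mem hσ hτ hq) (by simp only [rho, h])

section
variable {σ τ : ℝ} {K K' : Set (ℝ × ℝ)} {l u z e w x : ℝ × ℝ}

theorem gcoverV (hσ : Sgn σ) (hτ : Sgn τ) (hK : Convex ℝ K) (hK' : Convex ℝ K') (hc : IsCompact K')
    (hKK : K' ⊆ K) (hl : l ∈ K') (hu : u ∈ K')
    (hl1 : ∀ q ∈ K, σ * l.1 ≤ σ * q.1) (hu2 : ∀ q ∈ K, τ * q.2 ≤ τ * u.2) (hz : z ∈ gH σ τ K u)
    (he1 : e.1 = z.1) (hey : τ * e.2 ≤ τ * z.2)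
    (hE : e ∈ K → 0 < σ * τ * crossC l u e → e ∈ K') :
    ∃ w ∈ gH σ τ K' u, w.1 = z.1 ∧ τ * e.2 ≤ τ * w.2 ∧ τ * w.2 ≤ τ * z.2 := by
  have hee : ((rho σ τ z).1, τ * e.2) = rho σ τ e := by simp only [rho, he1]
  obtain ⟨w, hw, h1, h2, h3⟩ := coverV (rset_convex hK) (rset_convex hK') (rset_compact hσ hτ hc)
    (fun p hp => hKK hp) (rho_mem hσ hτ hl) (rho_mem hσ hτ hu)
    (fun q hq => by simpa only [rho, hσ.cancel] using hl1 _ hq)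
    (fun q hq => by simpa only [rho, hτ.cancel] using hu2 _ hq)
    ((mem_gH hσ hτ).1 hz) (ey := τ * e.2) hey (by
      rw [hee, rho_cross, mem_rset, mem_rset, rho_rho hσ hτ]; exact hE)
  refine ⟨rho σ τ w, (mem_gH hσ hτ).2 (by rwa [rho_rho hσ hτ]), ?_, ?_, ?_⟩
  · simp only [rho] at h1 ⊢; rw [h1, hσ.cancel]
  · simpa only [rho, hτ.cancel] using h2
  · simpa only [rho, hτ.cancel] using h3

theorem gcoverH (hσ : Sgn σ) (hτ : Sgn τ) (hK : Convex ℝ K) (hK' : Convex ℝ K') (hc : IsCompact K')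
    (hKK : K' ⊆ K) (hl : l ∈ K') (hu : u ∈ K')
    (hl1 : ∀ q ∈ K, σ * l.1 ≤ σ * q.1) (hu2 : ∀ q ∈ K, τ * q.2 ≤ τ * u.2) (hz : z ∈ gH σ τ K u)
    (he1 : e.2 = z.2) (hey : σ * z.1 ≤ σ * e.1)
    (hE : e ∈ K → 0 < σ * τ * crossC l u e → e ∈ K') :
    ∃ w ∈ gH σ τ K' u, w.2 = z.2 ∧ σ * z.1 ≤ σ * w.1 ∧ σ * w.1 ≤ σ * e.1 := by
  have hee : (σ * e.1, (rho σ τ z).2) = rho σ τ e := by simp only [rho, he1]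
  obtain ⟨w, hw, h1, h2, h3⟩ := coverH (rset_convex hK) (rset_convex hK') (rset_compact hσ hτ hc)
    (fun p hp => hKK hp) (rho_mem hσ hτ hl) (rho_mem hσ hτ hu)
    (fun q hq => by simpa only [rho, hσ.cancel] using hl1 _ hq)
    (fun q hq => by simpa only [rho, hτ.cancel] using hu2 _ hq)
    ((mem_gH hσ hτ).1 hz) (ex := σ * e.1) hey (by
      rw [hee, rho_cross, mem_rset, mem_rset, rho_rho hσ hτ]; exact hE)
  refine ⟨rho σ τ w, (mem_gH hσ hτ).2 (by rwa [rho_rho hσ hτ]), ?_, ?_, ?_⟩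
  · simp only [rho] at h1 ⊢; rw [h1, hτ.cancel]
  · simpa only [rho, hσ.cancel] using h2
  · simpa only [rho, hσ.cancel] using h3

theorem gext_vert (hσ : Sgn σ) (hτ : Sgn τ) (hK' : Convex ℝ K')
    (hl : l ∈ K') (hu : u ∈ K') (hl1 : ∀ q ∈ K', σ * l.1 ≤ σ * q.1)
    (hu2 : ∀ q ∈ K', τ * q.2 ≤ τ * u.2)
    (he : e ∈ Set.extremePoints ℝ K') (hC : 0 < σ * τ * crossC l u e) (hw : w ∈ K')
    (h1 : w.1 = e.1) (h2 : τ * e.2 ≤ τ * w.2) : w = e := by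
  have := ext_vert (rset_convex hK') (rho_mem hσ hτ hl) (rho_mem hσ hτ hu)
    (fun q hq => by simpa only [rho, hσ.cancel] using hl1 _ hq)
    (fun q hq => by simpa only [rho, hτ.cancel] using hu2 _ hq)
    (rset_ext hσ hτ he) (by rwa [rho_cross]) (rho_mem hσ hτ hw) (by simp only [rho, h1]) h2
  rw [← rho_rho hσ hτ w, this, rho_rho hσ hτ]

theorem gext_horiz (hσ : Sgn σ) (hτ : Sgn τ) (hK' : Convex ℝ K')
    (hl : l ∈ K') (hu : u ∈ K') (hl1 : ∀ q ∈ K', σ * l.1 ≤ σ * q.1)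
    (hu2 : ∀ q ∈ K', τ * q.2 ≤ τ * u.2)
    (he : e ∈ Set.extremePoints ℝ K') (hC : 0 < σ * τ * crossC l u e) (hw : w ∈ K')
    (h1 : w.2 = e.2) (h2 : σ * w.1 ≤ σ * e.1) : w = e := by
  have := ext_horiz (rset_convex hK') (rho_mem hσ hτ hl) (rho_mem hσ hτ hu)
    (fun q hq => by simpa only [rho, hσ.cancel] using hl1 _ hq)
    (fun q hq => by simpa only [rho, hτ.cancel] using hu2 _ hq)
    (rset_ext hσ hτ he) (by rwa [rho_cross]) (rho_mem hσ hτ hw) (by simp only [rho, h1]) h2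
  rw [← rho_rho hσ hτ w, this, rho_rho hσ hτ]

theorem gscv (hσ : Sgn σ) (hτ : Sgn τ) (hK' : Convex ℝ K')
    (hl : l ∈ K') (hu : u ∈ K') (hx : x ∈ Set.extremePoints ℝ K')
    (hxt : ∀ q ∈ K', q.1 = x.1 → τ * q.2 ≤ τ * x.2) (h1 : σ * l.1 < σ * x.1)
    (h2 : σ * x.1 < σ * u.1) : 0 < σ * τ * crossC l u x := by
  have := scv_cross (rset_convex hK') (rho_mem hσ hτ hl) (rho_mem hσ hτ hu)
    (rset_ext hσ hτ hx) (fun q hq h => by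
      have := hxt _ hq (by simp only [rho] at h ⊢; rw [h, hσ.cancel])
      simpa only [rho, hτ.cancel] using this) h1 h2
  rwa [rho_cross] at this

theorem gdisj {r b : ℝ × ℝ} (hlu : l ∈ K) (hr : r ∈ K) (hu : u ∈ K) (hb : b ∈ K) (he : e ∈ K)
    (hl1 : ∀ q ∈ K, σ * l.1 ≤ σ * q.1) (hr1 : ∀ q ∈ K, σ * q.1 ≤ σ * r.1)
    (hu2 : ∀ q ∈ K, τ * q.2 ≤ τ * u.2) (hb2 : ∀ q ∈ K, τ * b.2 ≤ τ * q.2)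
    (hC : 0 < σ * τ * crossC l u e) :
    σ * τ * crossC l u r ≤ 0 ∧ σ * τ * crossC l u b ≤ 0 ∧ 0 ≤ σ * τ * crossC r u e ∧
      0 ≤ σ * τ * crossC l b e ∧ σ * τ * crossC r b e ≤ 0 := by
  have := cross_disj (l := rho σ τ l) (r := rho σ τ r) (u := rho σ τ u) (b := rho σ τ b)
    (e := rho σ τ e) (hl1 _ hu) (hl1 _ hb) (hl1 _ he) (hr1 _ hu) (hr1 _ hb) (hr1 _ he)
    (hb2 _ hlu) (hb2 _ hr) (hb2 _ he) (hu2 _ hlu) (hu2 _ hr) (hu2 _ he) (by rwa [rho_cross])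
  simpa only [rho_cross] using this

end

open Classical in
/-- inner endpoint of a vertical segment -/
noncomputable def vend (τ : ℝ) (s : HVSeg) : ℝ × ℝ := if 0 < τ then s.p else s.q

open Classical in
/-- inner endpoint of a horizontal segment -/
noncomputable def hend (σ : ℝ) (s : HVSeg) : ℝ × ℝ := if 0 < σ then s.q else s.p

theorem vert_carrier {s : HVSeg} (h : s.IsVert) {w : ℝ × ℝ} :
    w ∈ s.carrier ↔ w.1 = s.p.1 ∧ s.p.2 ≤ w.2 ∧ w.2 ≤ s.q.2 := by
  obtain ⟨⟨p1, p2⟩, ⟨q1, q2⟩, hv⟩ := s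
  simp only [HVSeg.IsVert] at h
  subst h
  have hpq : p2 ≤ q2 := by
    rcases hv with h | h
    · exact h.2
    · exact h.1.le
  obtain ⟨w1, w2⟩ := w
  simp only [HVSeg.carrier, ← Prod.image_mk_segment_right, segment_eq_Icc hpq, Set.mem_image, Set.mem_Icc,
    Prod.mk.injEq]
  constructor
  · rintro ⟨y, hy, rfl, rfl⟩; exact ⟨rfl, hy⟩
  · rintro ⟨rfl, hy⟩; exact ⟨_, hy, rfl, rfl⟩

theorem horiz_carrier {s : HVSeg} (h : s.IsHoriz) {w : ℝ × ℝ} :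
    w ∈ s.carrier ↔ w.2 = s.p.2 ∧ s.p.1 ≤ w.1 ∧ w.1 ≤ s.q.1 := by
  obtain ⟨⟨p1, p2⟩, ⟨q1, q2⟩, hv⟩ := s
  simp only [HVSeg.IsHoriz] at h
  subst h
  have hpq : p1 ≤ q1 := by
    rcases hv with h | h
    · exact h.1.le
    · exact h.2
  obtain ⟨w1, w2⟩ := w
  simp only [HVSeg.carrier, ← Prod.image_mk_segment_left, segment_eq_Icc hpq, Set.mem_image, Set.mem_Icc,
    Prod.mk.injEq]
  constructor
  · rintro ⟨y, hy, rfl, rfl⟩; exact ⟨rfl, hy⟩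
  · rintro ⟨rfl, hy⟩; exact ⟨_, hy, rfl, rfl⟩

theorem vend_le {τ : ℝ} (hτ : Sgn τ) {s : HVSeg} (h : s.IsVert) {w : ℝ × ℝ} (hw : w ∈ s.carrier) :
    (vend τ s).1 = w.1 ∧ τ * (vend τ s).2 ≤ τ * w.2 := by
  have h' : s.p.1 = s.q.1 := h
  rw [vert_carrier h] at hw
  rcases hτ with rfl | rfl
  · simp [vend, hw]
  · have : ¬ (0 : ℝ) < -1 := by norm_num
    simp [vend, this, hw, h'.symm]

theorem hend_le {σ : ℝ} (hσ : Sgn σ) {s : HVSeg} (h : s.IsHoriz) {w : ℝ × ℝ}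
    (hw : w ∈ s.carrier) :
    (hend σ s).2 = w.2 ∧ σ * w.1 ≤ σ * (hend σ s).1 := by
  have h' : s.p.2 = s.q.2 := h
  rw [horiz_carrier h] at hw
  rcases hσ with rfl | rfl
  · simp [hend, hw, h'.symm]
  · have : ¬ (0 : ℝ) < -1 := by norm_num
    simp [hend, this, hw]

theorem vend_mem (τ : ℝ) (s : HVSeg) : vend τ s ∈ s.carrier := by
  unfold vend HVSeg.carrier
  split_ifs
  exacts [left_mem_segment _ _ _, right_mem_segment _ _ _]

theorem hend_mem (τ : ℝ) (s : HVSeg) : hend τ s ∈ s.carrier := by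
  unfold hend HVSeg.carrier
  split_ifs
  exacts [right_mem_segment _ _ _, left_mem_segment _ _ _]

theorem vert_between {τ : ℝ} (hτ : Sgn τ) {s : HVSeg} (h : s.IsVert) {z w : ℝ × ℝ}
    (hz : z ∈ s.carrier) (h1 : w.1 = z.1) (h2 : τ * (vend τ s).2 ≤ τ * w.2)
    (h3 : τ * w.2 ≤ τ * z.2) : w ∈ s.carrier := by
  rw [vert_carrier h] at hz ⊢
  rcases hτ with rfl | rfl
  · simp [vend] at h2 h3
    exact ⟨by linarith, by linarith, by linarith⟩
  · have : ¬ (0 : ℝ) < -1 := by norm_num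
    simp [vend, this] at h2 h3
    exact ⟨by linarith, by linarith, by linarith⟩

theorem horiz_between {σ : ℝ} (hσ : Sgn σ) {s : HVSeg} (h : s.IsHoriz) {z w : ℝ × ℝ}
    (hz : z ∈ s.carrier) (h1 : w.2 = z.2) (h2 : σ * z.1 ≤ σ * w.1)
    (h3 : σ * w.1 ≤ σ * (hend σ s).1) : w ∈ s.carrier := by
  rw [horiz_carrier h] at hz ⊢
  rcases hσ with rfl | rfl
  · simp [hend] at h2 h3
    exact ⟨by linarith, by linarith, by linarith⟩
  · have : ¬ (0 : ℝ) < -1 := by norm_num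
    simp [hend, this] at h2 h3
    exact ⟨by linarith, by linarith, by linarith⟩

/-- `e` is an inner endpoint of the type relevant for quadrant `σ τ`. -/
def Endp (R : Finset HVSeg) (σ τ : ℝ) (e : ℝ × ℝ) : Prop :=
  (∃ s ∈ R, s.IsVert ∧ e = vend τ s) ∨ (∃ s ∈ R, s.IsHoriz ∧ e = hend σ s)

/-- the endpoints beyond the chord of a quadrant -/
def Esub (R : Finset HVSeg) (K : Set (ℝ × ℝ)) (σ τ : ℝ) (l u : ℝ × ℝ) : Set (ℝ × ℝ) :=
  {e | e ∈ K ∧ Endp R σ τ e ∧ 0 < σ * τ * crossC l u e}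

theorem Esub_finite (R : Finset HVSeg) (K : Set (ℝ × ℝ)) (σ τ : ℝ) (l u : ℝ × ℝ) :
    (Esub R K σ τ l u).Finite := by
  refine ((R.finite_toSet.image (vend τ)).union (R.finite_toSet.image (hend σ))).subset ?_
  rintro e ⟨-, (⟨s, hs, -, rfl⟩ | ⟨s, hs, -, rfl⟩), -⟩
  · exact Or.inl ⟨s, hs, rfl⟩
  · exact Or.inr ⟨s, hs, rfl⟩

theorem quad_cover {R : Finset HVSeg} {σ τ : ℝ} {K K' : Set (ℝ × ℝ)} {l u : ℝ × ℝ}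
    (hσ : Sgn σ) (hτ : Sgn τ) (hK : Convex ℝ K) (hK' : Convex ℝ K') (hc : IsCompact K')
    (hKK : K' ⊆ K) (hl : l ∈ K') (hu : u ∈ K')
    (hl1 : ∀ q ∈ K, σ * l.1 ≤ σ * q.1) (hu2 : ∀ q ∈ K, τ * q.2 ≤ τ * u.2)
    (hE : Esub R K σ τ l u ⊆ K') (s : HVSeg) (hs : s ∈ R)
    (hn : (gH σ τ K u ∩ s.carrier).Nonempty) : (gH σ τ K' u ∩ s.carrier).Nonempty := by
  obtain ⟨z, hz, hzs⟩ := hn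
  have hv : s.IsVert ∨ s.IsHoriz := s.hv.imp And.left And.left
  rcases hv with hv | hv
  · obtain ⟨a1, a2⟩ := vend_le hτ hv hzs
    obtain ⟨w, hw, h1, h2, h3⟩ := gcoverV hσ hτ hK hK' hc hKK hl hu hl1 hu2 hz a1 a2
      (fun h h' => hE ⟨h, Or.inl ⟨s, hs, hv, rfl⟩, h'⟩)
    exact ⟨w, hw, vert_between hτ hv hzs h1 h2 h3⟩
  · obtain ⟨a1, a2⟩ := hend_le hσ hv hzs
    obtain ⟨w, hw, h1, h2, h3⟩ := gcoverH hσ hτ hK hK' hc hKK hl hu hl1 hu2 hz a1 a2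
      (fun h h' => hE ⟨h, Or.inr ⟨s, hs, hv, rfl⟩, h'⟩)
    exact ⟨w, hw, horiz_between hσ hv hzs h1 h2 h3⟩

theorem quad_pick {R : Finset HVSeg} {σ τ : ℝ} {K K' : Set (ℝ × ℝ)} {l u e : ℝ × ℝ}
    (hσ : Sgn σ) (hτ : Sgn τ) (hK' : Convex ℝ K')
    (hl : l ∈ K') (hu : u ∈ K')
    (hl1 : ∀ q ∈ K', σ * l.1 ≤ σ * q.1) (hu2 : ∀ q ∈ K', τ * q.2 ≤ τ * u.2)
    (he : e ∈ Esub R K σ τ l u) (hx : e ∈ Set.extremePoints ℝ K') :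
    ∃ s ∈ R, e ∈ s.carrier ∧ ∀ w ∈ K', w ∈ s.carrier → w = e := by
  obtain ⟨-, (⟨s, hs, hv, rfl⟩ | ⟨s, hs, hv, rfl⟩), hC⟩ := he
  · refine ⟨s, hs, vend_mem _ _, fun w hw hws => ?_⟩
    obtain ⟨a1, a2⟩ := vend_le hτ hv hws
    exact gext_vert hσ hτ hK' hl hu hl1 hu2 hx hC hw a1.symm a2
  · refine ⟨s, hs, hend_mem _ _, fun w hw hws => ?_⟩
    obtain ⟨a1, a2⟩ := hend_le hσ hv hws
    exact gext_horiz hσ hτ hK' hl hu hl1 hu2 hx hC hw a1.symm a2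

theorem quad_scv {R : Finset HVSeg} {σ τ : ℝ} {K K' A : Set (ℝ × ℝ)} {l r u b x : ℝ × ℝ}
    (hσ : Sgn σ) (hτ : Sgn τ) (hK' : Convex ℝ K') (hA : Set.extremePoints ℝ K' ⊆ A)
    (hl : l ∈ K') (hr : r ∈ K') (hu : u ∈ K') (hb : b ∈ K')
    (hl1 : ∀ q ∈ K', σ * l.1 ≤ σ * q.1) (hr1 : ∀ q ∈ K', σ * q.1 ≤ σ * r.1)
    (hu2 : ∀ q ∈ K', τ * q.2 ≤ τ * u.2) (hb2 : ∀ q ∈ K', τ * b.2 ≤ τ * q.2)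
    (hAE : ∀ e ∈ A, (e = l ∨ e = r ∨ e = u ∨ e = b) ∨ e ∈ Esub R K σ τ l u ∨
      e ∈ Esub R K (-σ) τ r u ∨ e ∈ Esub R K σ (-τ) l b ∨ e ∈ Esub R K (-σ) (-τ) r b)
    (hx : x ∈ Set.extremePoints ℝ K')
    (hxt : ∀ q ∈ K', q.1 = x.1 → τ * q.2 ≤ τ * x.2) (h1 : σ * l.1 < σ * x.1)
    (h2 : σ * x.1 < σ * u.1) : Endp R σ τ x := by
  have hC := gscv hσ hτ hK' hl hu hx hxt h1 h2
  obtain ⟨d1, d2, d3, d4, d5⟩ := gdisj hl hr hu hb hx.1 hl1 hr1 hu2 hb2 hC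
  rcases hAE x (hA hx) with (rfl | rfl | rfl | rfl) | h | h | h | h
  · exact absurd h1 (lt_irrefl _)
  · exact absurd hC (not_lt.2 d1)
  · exact absurd h2 (lt_irrefl _)
  · exact absurd hC (not_lt.2 d2)
  · exact h.2.1
  · have := h.2.2; nlinarith
  · have := h.2.2; nlinarith
  · have := h.2.2; nlinarith

theorem ext_support {A : Set (ℝ × ℝ)} (hA : A.Finite) {x : ℝ × ℝ}
    (hx : x ∈ Set.extremePoints ℝ (convexHull ℝ A)) :
    ∃ a : ℝ × ℝ, ∃ c : ℝ, a ≠ 0 ∧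
    (∀ p ∈ convexHull ℝ A, a.1 * p.1 + a.2 * p.2 ≤ c) ∧ a.1 * x.1 + a.2 * x.2 = c := by
  set B := convexHull ℝ (A \ {x}) with hB
  have hxA : x ∈ A := extremePoints_convexHull_subset hx
  have hxB : x ∉ B := by
    intro h
    have hsub : B ⊆ convexHull ℝ A := convexHull_mono Set.sdiff_subset
    have h2 : x ∈ Set.extremePoints ℝ B := 
      ⟨h, fun y hy z hz hm => hx.2 (hsub hy) (hsub hz) hm⟩
    have := extremePoints_convexHull_subset h2
    exact this.2 rfl
  have hBc : IsClosed B := ((hA.subset Set.sdiff_subset).isCompact_convexHull ℝ).isClosed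
  obtain ⟨f, c, hf1, hf2⟩ := geometric_hahn_banach_closed_point (convex_convexHull ℝ _) hBc hxB
  have hf : ∀ p : ℝ × ℝ, f p = f (1, 0) * p.1 + f (0, 1) * p.2 := by
    intro p
    have : p = p.1 • ((1, 0) : ℝ × ℝ) + p.2 • ((0, 1) : ℝ × ℝ) := by ext <;> simp
    conv_lhs => rw [this, map_add, map_smul, map_smul]
    simp only [smul_eq_mul]; ring
  have hall : ∀ p ∈ convexHull ℝ A, f p ≤ f x := by
    have : convexHull ℝ A ⊆ {p | f p ≤ f x} := by
      refine convexHull_min ?_ (convex_halfSpace_le f.toLinearMap.isLinear _)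
      intro p hp
      by_cases h : p = x
      · simp [h]
      · exact ((hf1 p (subset_convexHull ℝ _ ⟨hp, h⟩)).trans hf2).le
    exact this
  by_cases h0 : ((f (1, 0), f (0, 1)) : ℝ × ℝ) = 0
  · refine ⟨(1, 0), x.1, by simp, fun p hp => ?_, by simp⟩
    have hz : ∀ p, f p = 0 := by
      intro p
      rw [hf p]
      simp only [Prod.mk_eq_zero] at h0
      simp [h0.1, h0.2]
    have hAx : A ⊆ {x} := by
      intro p hp
      by_contra h
      have := (hf1 p (subset_convexHull ℝ _ ⟨hp, h⟩)).trans hf2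
      rw [hz, hz] at this
      exact lt_irrefl _ this
    have := convexHull_mono (𝕜 := ℝ) hAx hp
    rw [convexHull_singleton] at this
    rw [this]; simp
  · exact ⟨_, f x, h0, fun p hp => by simpa only [← hf] using hall p hp, (hf x).symm⟩

/-- canonicalization of a convex partial transversal of a family of
pairwise disjoint horizontal and vertical segments in general position, with the
same four extreme vertices, hull-quarter-wise containment of the met segments,
and strictly convex vertices of each quarter hull on the appropriate segment
endpoints. -/
theorem two_oriented_cpt_canonical
    (R : Finset HVSeg)
    (hgen : GenPos R)
    (hdisj : ∀ s ∈ R, ∀ t ∈ R, s ≠ t → s.carrier ∩ t.carrier = ∅)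
    (T : CPT R) (l r u b : ℝ × ℝ)
    (hl : l ∈ T.Q ∧ ∀ q ∈ T.Q, l.1 ≤ q.1)
    (hr : r ∈ T.Q ∧ ∀ q ∈ T.Q, q.1 ≤ r.1)
    (hu : u ∈ T.Q ∧ ∀ q ∈ T.Q, q.2 ≤ u.2)
    (hb : b ∈ T.Q ∧ ∀ q ∈ T.Q, b.2 ≤ q.2) :
    ∃ T' : CPT R,
      (l ∈ T'.Q ∧ ∀ q ∈ T'.Q, l.1 ≤ q.1) ∧
      (r ∈ T'.Q ∧ ∀ q ∈ T'.Q, q.1 ≤ r.1) ∧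
      (u ∈ T'.Q ∧ ∀ q ∈ T'.Q, q.2 ≤ u.2) ∧
      (b ∈ T'.Q ∧ ∀ q ∈ T'.Q, b.2 ≤ q.2) ∧
      (∀ s ∈ R, (ULHull ↑T.Q u ∩ s.carrier).Nonempty → (ULHull ↑T'.Q u ∩ s.carrier).Nonempty) ∧
      (∀ s ∈ R, (URHull ↑T.Q u ∩ s.carrier).Nonempty → (URHull ↑T'.Q u ∩ s.carrier).Nonempty) ∧
      (∀ s ∈ R, (LLHull ↑T.Q b ∩ s.carrier).Nonempty → (LLHull ↑T'.Q b ∩ s.carrier).Nonempty) ∧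
      (∀ s ∈ R, (LRHull ↑T.Q b ∩ s.carrier).Nonempty → (LRHull ↑T'.Q b ∩ s.carrier).Nonempty) ∧
      (∀ x, SCV_UL ↑T'.Q l u x →
        (∃ s ∈ R, s.IsVert ∧ x = s.p) ∨ (∃ s ∈ R, s.IsHoriz ∧ x = s.q)) ∧
      (∀ x, SCV_UR ↑T'.Q u r x →
        (∃ s ∈ R, s.IsVert ∧ x = s.p) ∨ (∃ s ∈ R, s.IsHoriz ∧ x = s.p)) ∧
      (∀ x, SCV_LL ↑T'.Q l b x →
        (∃ s ∈ R, s.IsVert ∧ x = s.q) ∨ (∃ s ∈ R, s.IsHoriz ∧ x = s.q)) ∧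
      (∀ x, SCV_LR ↑T'.Q b r x →
        (∃ s ∈ R, s.IsVert ∧ x = s.q) ∨ (∃ s ∈ R, s.IsHoriz ∧ x = s.p)) := by
  classical
  set K : Set (ℝ × ℝ) := convexHull ℝ (↑T.Q : Set (ℝ × ℝ)) with hKdef
  have hKc : Convex ℝ K := convex_convexHull ℝ _
  have s1 : Sgn 1 := Or.inl rfl
  have s2 : Sgn (-1) := Or.inr rfl
  have hsubK : ∀ q ∈ T.Q, q ∈ K := fun q hq => subset_convexHull ℝ _ hq
  have kl : ∀ q ∈ K, l.1 ≤ q.1 := by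
    have : K ⊆ {p | l.1 ≤ p.1} :=
      convexHull_min (fun q hq => hl.2 q hq)
        (convex_halfSpace_ge (LinearMap.fst ℝ ℝ ℝ).isLinear l.1)
    exact this
  have kr : ∀ q ∈ K, q.1 ≤ r.1 := by
    have : K ⊆ {p | p.1 ≤ r.1} :=
      convexHull_min (fun q hq => hr.2 q hq)
        (convex_halfSpace_le (LinearMap.fst ℝ ℝ ℝ).isLinear r.1)
    exact this
  have ku : ∀ q ∈ K, q.2 ≤ u.2 := by
    have : K ⊆ {p | p.2 ≤ u.2} :=
      convexHull_min (fun q hq => hu.2 q hq)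
        (convex_halfSpace_le (LinearMap.snd ℝ ℝ ℝ).isLinear u.2)
    exact this
  have kb : ∀ q ∈ K, b.2 ≤ q.2 := by
    have : K ⊆ {p | b.2 ≤ p.2} :=
      convexHull_min (fun q hq => hb.2 q hq)
        (convex_halfSpace_ge (LinearMap.snd ℝ ℝ ℝ).isLinear b.2)
    exact this
  set A : Set (ℝ × ℝ) := {l, r, u, b} ∪ (Esub R K 1 1 l u ∪ (Esub R K (-1) 1 r u ∪
    (Esub R K 1 (-1) l b ∪ Esub R K (-1) (-1) r b))) with hA
  have hAf : A.Finite := (Set.toFinite _).union ((Esub_finite _ _ _ _ _ _).union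
    ((Esub_finite _ _ _ _ _ _).union ((Esub_finite _ _ _ _ _ _).union (Esub_finite _ _ _ _ _ _))))
  have hAK : A ⊆ K := by
    rintro e ((rfl | rfl | rfl | rfl) | h | h | h | h)
    exacts [hsubK _ hl.1, hsubK _ hr.1, hsubK _ hu.1, hsubK _ hb.1, h.1, h.1, h.1, h.1]
  set K' : Set (ℝ × ℝ) := convexHull ℝ A with hK'def
  have hK'c : Convex ℝ K' := convex_convexHull ℝ _
  have hK'k : IsCompact K' := hAf.isCompact_convexHull ℝ
  have hKK : K' ⊆ K := convexHull_min hAK hKc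
  have hAK' : A ⊆ K' := subset_convexHull ℝ _
  have hext : Set.extremePoints ℝ K' ⊆ A := extremePoints_convexHull_subset
  have hlK : l ∈ K' := hAK' (by simp [hA])
  have hrK : r ∈ K' := hAK' (by simp [hA])
  have huK : u ∈ K' := hAK' (by simp [hA])
  have hbK : b ∈ K' := hAK' (by simp [hA])
  have hE1 : Esub R K 1 1 l u ⊆ K' := fun e he => hAK' (Or.inr (Or.inl he))
  have hE2 : Esub R K (-1) 1 r u ⊆ K' := fun e he => hAK' (Or.inr (Or.inr (Or.inl he)))
  have hE3 : Esub R K 1 (-1) l b ⊆ K' :=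
    fun e he => hAK' (Or.inr (Or.inr (Or.inr (Or.inl he))))
  have hE4 : Esub R K (-1) (-1) r b ⊆ K' :=
    fun e he => hAK' (Or.inr (Or.inr (Or.inr (Or.inr he))))
  -- signed bounds
  have gl : ∀ q ∈ K, (1 : ℝ) * l.1 ≤ 1 * q.1 := fun q hq => by linarith [kl q hq]
  have gl' : ∀ q ∈ K, (-1 : ℝ) * q.1 ≤ -1 * l.1 := fun q hq => by linarith [kl q hq]
  have gr : ∀ q ∈ K, (-1 : ℝ) * r.1 ≤ -1 * q.1 := fun q hq => by linarith [kr q hq]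
  have gr' : ∀ q ∈ K, (1 : ℝ) * q.1 ≤ 1 * r.1 := fun q hq => by linarith [kr q hq]
  have gu : ∀ q ∈ K, (1 : ℝ) * q.2 ≤ 1 * u.2 := fun q hq => by linarith [ku q hq]
  have gu' : ∀ q ∈ K, (-1 : ℝ) * u.2 ≤ -1 * q.2 := fun q hq => by linarith [ku q hq]
  have gb : ∀ q ∈ K, (-1 : ℝ) * q.2 ≤ -1 * b.2 := fun q hq => by linarith [kb q hq]
  have gb' : ∀ q ∈ K, (1 : ℝ) * b.2 ≤ 1 * q.2 := fun q hq => by linarith [kb q hq]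
  have hpick : ∀ e, e ∈ Set.extremePoints ℝ K' → e ∉ ({l, r, u, b} : Set (ℝ × ℝ)) →
      ∃ s ∈ R, e ∈ s.carrier ∧ ∀ w ∈ K', w ∈ s.carrier → w = e := by
    intro e he hne
    rcases hext he with h | h | h | h | h
    · exact absurd h hne
    · exact quad_pick s1 s1 hK'c hlK huK (fun q hq => gl q (hKK hq)) (fun q hq => gu q (hKK hq)) h he
    · exact quad_pick s2 s1 hK'c hrK huK (fun q hq => gr q (hKK hq)) (fun q hq => gu q (hKK hq)) h he
    · exact quad_pick s1 s2 hK'c hlK hbK (fun q hq => gl q (hKK hq)) (fun q hq => gb q (hKK hq)) h he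
    · exact quad_pick s2 s2 hK'c hrK hbK (fun q hq => gr q (hKK hq)) (fun q hq => gb q (hKK hq)) h he
  choose g hgR hge hgu using hpick
  -- the new point set
  set S : Set (ℝ × ℝ) := {l, r, u, b} ∪ Set.extremePoints ℝ K' with hS
  have hSA : S ⊆ A := Set.union_subset Set.subset_union_left hext
  have hSf : S.Finite := hAf.subset hSA
  have hSK : S ⊆ K' := hSA.trans hAK'
  have hhull : convexHull ℝ S = K' := by
    apply Set.Subset.antisymm (convexHull_min hSK hK'c)
    have h1 := closure_convexHull_extremePoints hK'k hK'c
    have h2 : IsClosed (convexHull ℝ (Set.extremePoints ℝ K')) :=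
      ((hAf.subset hext).isCompact_convexHull ℝ).isClosed
    rw [h2.closure_eq] at h1
    exact h1.symm.subset.trans (convexHull_mono Set.subset_union_right)
  have hfour : ∀ q ∈ ({l, r, u, b} : Set (ℝ × ℝ)), q ∈ T.Q := by
    rintro q (rfl | rfl | rfl | rfl)
    exacts [hl.1, hr.1, hu.1, hb.1]
  have hSc : (↑hSf.toFinset : Set (ℝ × ℝ)) = S := hSf.coe_toFinset
  let f' : ℝ × ℝ → HVSeg := fun q =>
    if h : q ∈ Set.extremePoints ℝ K' ∧ q ∉ ({l, r, u, b} : Set (ℝ × ℝ)) then g q h.1 h.2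
    else T.f q
  have hf1 : ∀ q (h1 : q ∈ Set.extremePoints ℝ K') (h2 : q ∉ ({l, r, u, b} : Set (ℝ × ℝ))),
      f' q = g q h1 h2 := fun q h1 h2 => dif_pos ⟨h1, h2⟩
  have hf2 : ∀ q, q ∈ ({l, r, u, b} : Set (ℝ × ℝ)) → f' q = T.f q :=
    fun q h => dif_neg (fun hh => hh.2 h)
  have hsplit : ∀ q ∈ S, q ∈ ({l, r, u, b} : Set (ℝ × ℝ)) ∨
      (q ∈ Set.extremePoints ℝ K' ∧ q ∉ ({l, r, u, b} : Set (ℝ × ℝ))) := by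
    intro q hq
    by_cases h : q ∈ ({l, r, u, b} : Set (ℝ × ℝ))
    · exact Or.inl h
    · exact Or.inr ⟨hq.resolve_left h, h⟩
  have hqm : ∀ q ∈ S, q ∈ (f' q).carrier := by
    intro q hq
    rcases hsplit q hq with h | ⟨h1, h2⟩
    · rw [hf2 q h]; exact T.q_mem q (hfour q h)
    · rw [hf1 q h1 h2]; exact hge q h1 h2
  let T' : CPT R :=
    { Q := hSf.toFinset
      f := f'
      pos := by
        rw [hSc]
        rintro q ((rfl | rfl | rfl | rfl) | hq)
        · exact ⟨(-1, 0), -q.1, by simp, fun p hp => by have := kl p (hKK (hSK hp)); simp; linarith,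
            by simp⟩
        · exact ⟨(1, 0), q.1, by simp, fun p hp => by have := kr p (hKK (hSK hp)); simp; linarith,
            by simp⟩
        · exact ⟨(0, 1), q.2, by simp, fun p hp => by have := ku p (hKK (hSK hp)); simp; linarith,
            by simp⟩
        · exact ⟨(0, -1), -q.2, by simp, fun p hp => by have := kb p (hKK (hSK hp)); simp; linarith,
            by simp⟩
        · obtain ⟨a, c, h1, h2, h3⟩ := ext_support hAf hq
          exact ⟨a, c, h1, fun p hp => h2 p (hSK hp), h3⟩
      f_mem := by
        intro q hq
        rw [Set.Finite.mem_toFinset] at hq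
        rcases hsplit q hq with h | ⟨h1, h2⟩
        · rw [hf2 q h]; exact T.f_mem q (hfour q h)
        · rw [hf1 q h1 h2]; exact hgR q h1 h2
      f_inj := by
        rw [hSc]
        intro p hp q hq hpq
        rcases hsplit q hq with h | ⟨h1, h2⟩
        · rcases hsplit p hp with h' | ⟨h1', h2'⟩
          · rw [hf2 q h, hf2 p h'] at hpq
            exact T.f_inj (hfour p h') (hfour q h) hpq
          · have := hqm q hq
            rw [← hpq, hf1 p h1' h2'] at this
            exact (hgu p h1' h2' q (hSK hq) this).symm
        · have := hqm p hp
          rw [hpq, hf1 q h1 h2] at this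
          exact hgu q h1 h2 p (hSK hp) this
      q_mem := by
        intro q hq
        rw [Set.Finite.mem_toFinset] at hq
        exact hqm q hq }
  have hTQ : (↑T'.Q : Set (ℝ × ℝ)) = S := hSc
  have hTm : ∀ q, q ∈ T'.Q ↔ q ∈ S := fun q => hSf.mem_toFinset
  have e1 : ∀ (B : Set (ℝ × ℝ)) v, ULHull B v = gH 1 1 (convexHull ℝ B) v := by
    intro B v; ext x; simp [ULHull, upperHullS, gH, and_assoc]
  have e2 : ∀ (B : Set (ℝ × ℝ)) v, URHull B v = gH (-1) 1 (convexHull ℝ B) v := by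
    intro B v; ext x; simp [URHull, upperHullS, gH, and_assoc]
  have e3 : ∀ (B : Set (ℝ × ℝ)) v, LLHull B v = gH 1 (-1) (convexHull ℝ B) v := by
    intro B v; ext x; simp [LLHull, lowerHullS, gH, and_assoc]
  have e4 : ∀ (B : Set (ℝ × ℝ)) v, LRHull B v = gH (-1) (-1) (convexHull ℝ B) v := by
    intro B v; ext x; simp [LRHull, lowerHullS, gH, and_assoc]
  have nm : ¬ (0 : ℝ) < -1 := by norm_num
  refine ⟨T', ⟨(hTm _).2 (by simp [hS]), fun q hq => kl q (hKK (hSK ((hTm q).1 hq)))⟩,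
    ⟨(hTm _).2 (by simp [hS]), fun q hq => kr q (hKK (hSK ((hTm q).1 hq)))⟩,
    ⟨(hTm _).2 (by simp [hS]), fun q hq => ku q (hKK (hSK ((hTm q).1 hq)))⟩,
    ⟨(hTm _).2 (by simp [hS]), fun q hq => kb q (hKK (hSK ((hTm q).1 hq)))⟩, ?_⟩
  rw [hTQ]
  simp only [e1, e2, e3, e4, hhull, SCV_UL, SCV_UR, SCV_LL, SCV_LR, upperHullS, lowerHullS]
  refine ⟨quad_cover s1 s1 hKc hK'c hK'k hKK hlK huK gl gu hE1,
    quad_cover s2 s1 hKc hK'c hK'k hKK hrK huK gr gu hE2,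
    quad_cover s1 s2 hKc hK'c hK'k hKK hlK hbK gl gb hE3,
    quad_cover s2 s2 hKc hK'c hK'k hKK hrK hbK gr gb hE4, ?_, ?_, ?_, ?_⟩
  · rintro x ⟨⟨-, hx⟩, hxe, h1, h2⟩
    have := quad_scv (R := R) (K := K) s1 s1 hK'c hext hlK hrK huK hbK
      (fun q hq => gl q (hKK hq)) (fun q hq => gr' q (hKK hq)) (fun q hq => gu q (hKK hq))
      (fun q hq => gb' q (hKK hq)) (by
        rintro e (h | h | h | h | h)
        · exact Or.inl (by simpa using h)
        all_goals tauto) hxe (fun q hq h => by have := hx q hq h; linarith) (by linarith) (by linarith)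
    simpa [Endp, vend, hend] using this
  · rintro x ⟨⟨-, hx⟩, hxe, h1, h2⟩
    have := quad_scv (R := R) (K := K) s2 s1 hK'c hext hrK hlK huK hbK
      (fun q hq => gr q (hKK hq)) (fun q hq => gl' q (hKK hq)) (fun q hq => gu q (hKK hq))
      (fun q hq => gb' q (hKK hq)) (by
        rw [neg_neg]
        rintro e (h | h | h | h | h)
        · exact Or.inl (by simp only [Set.mem_insert_iff, Set.mem_singleton_iff] at h; tauto)
        all_goals tauto) hxe (fun q hq h => by have := hx q hq h; linarith) (by linarith) (by linarith)
    simpa [Endp, vend, hend, nm] using this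
  · rintro x ⟨⟨-, hx⟩, hxe, h1, h2⟩
    have := quad_scv (R := R) (K := K) s1 s2 hK'c hext hlK hrK hbK huK
      (fun q hq => gl q (hKK hq)) (fun q hq => gr' q (hKK hq)) (fun q hq => gb q (hKK hq))
      (fun q hq => gu' q (hKK hq)) (by
        rw [neg_neg]
        rintro e (h | h | h | h | h)
        · exact Or.inl (by simp only [Set.mem_insert_iff, Set.mem_singleton_iff] at h; tauto)
        all_goals tauto) hxe (fun q hq h => by have := hx q hq h; linarith) (by linarith) (by linarith)
    simpa [Endp, vend, hend, nm] using this
  · rintro x ⟨⟨-, hx⟩, hxe, h1, h2⟩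
    have := quad_scv (R := R) (K := K) s2 s2 hK'c hext hrK hlK hbK huK
      (fun q hq => gr q (hKK hq)) (fun q hq => gl' q (hKK hq)) (fun q hq => gb q (hKK hq))
      (fun q hq => gu' q (hKK hq)) (by
        rw [neg_neg]
        rintro e (h | h | h | h | h)
        · exact Or.inl (by simp only [Set.mem_insert_iff, Set.mem_singleton_iff] at h; tauto)
        all_goals tauto) hxe (fun q hq h => by have := hx q hq h; linarith) (by linarith) (by linarith)
    simpa [Endp, vend, hend, nm] using this
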